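/- (Lemma 4.1.) Fix T > 0. For all positive constants c₋ ≤ c₊ and χ₋ ≤ χ₊ there exist positive constants C₋, C₊ and ε₀ such that the following holds for all ε ∈ (0,ε₀]: let β = β(ε) ≥ 0 with β → 0 as ε → 0, let ã : [−T,T] → ℝ be continuous with −c₊(β ∨ |t|) ≤ ã(t) ≤ −c₋(β ∨ |t|) for all |t| ≤ T, let χ₀ ∈ [χ₋, χ₊], and set α̃(t,s) = ∫_s^t ã(u) du. Then the function F(t) := χ₀ e^{α̃(t,−T)/ε} + ε⁻¹∫_{−T}^t e^{α̃(t,s)/ε} ds satisfies C₋/(β ∨ √ε) ≤ F(t) ≤ C₊/(β ∨ √ε) for |t| ≤ β ∨ √ε, and C₋/|t| ≤ F(t) ≤ C₊/|t| for β ∨ √ε ≤ |t| ≤ T. -/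

import Mathlib

open MeasureTheory Real Set

namespace BerglundGentz

noncomputable section

/-- Partial derivative of the drift `f` with respect to the space variable. -/
def dxf (f : ℝ → ℝ → ℝ) (x t : ℝ) : ℝ := deriv (fun y => f y t) x

/-- Second partial derivative of the drift `f` with respect to the space variable. -/
def dxxf (f : ℝ → ℝ → ℝ) (x t : ℝ) : ℝ := iteratedDeriv 2 (fun y => f y t) x

/-- Hypotheses on the symmetric class of double-well drifts `f`, with equilibrium
branches `0` and `± xs`, minimal barrier parameter `a₀`, and comparison constants
`cm ≤ cp` (all `≍` bounds are encoded through `cm`, `cp`). -/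
structure SymClass (d T a₁ cm cp ε a₀ : ℝ) (f : ℝ → ℝ → ℝ) (xs : ℝ → ℝ) : Prop where
  hd : 0 < d
  hT : 0 < T
  hT' : T < 1 / 2
  hε : 0 < ε
  ha₀ : 0 ≤ a₀
  ha₁ : 0 < a₁
  hcm : 0 < cm
  hcmcp : cm ≤ cp
  smooth : ContDiffOn ℝ 4 (fun p : ℝ × ℝ => f p.1 p.2) (Icc (-d) d ×ˢ univ)
  periodic : ∀ x t, f x (t + 1) = f x t
  odd : ∀ x t, f (-x) t = -f x t
  xs_cont : Continuous xs
  xs_pos : ∀ t, 0 < xs t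
  xs_le_d : ∀ t, xs t ≤ d
  zeros : ∀ x t, |x| ≤ d → (f x t = 0 ↔ x = 0 ∨ x = xs t ∨ x = -xs t)
  stab0 : ∀ t, 0 < dxf f 0 t
  stabstar : ∀ t, dxf f (xs t) t < 0
  pitchfork : iteratedDeriv 3 (fun y => f y 0) 0 < 0
  a_taylor : ∀ t, |t| ≤ T → |dxf f 0 t - (a₀ + a₁ * t ^ 2)| ≤ cp * |t| ^ 3
  xs_asymp : ∀ t, |t| ≤ T →
    cm * max (Real.sqrt a₀) |t| ≤ xs t ∧ xs t ≤ cp * max (Real.sqrt a₀) |t|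
  xs_mid : ∀ t, T ≤ t → t ≤ 1 - T → cm ≤ xs t ∧ xs t ≤ cp
  a_asymp : ∀ t, |t| ≤ T →
    cm * max a₀ (t ^ 2) ≤ dxf f 0 t ∧ dxf f 0 t ≤ cp * max a₀ (t ^ 2)
  a_mid : ∀ t, T ≤ t → t ≤ 1 - T → cm ≤ dxf f 0 t ∧ dxf f 0 t ≤ cp
  astar_asymp : ∀ t, cm * dxf f 0 t ≤ -dxf f (xs t) t ∧ -dxf f (xs t) t ≤ cp * dxf f 0 t

/-- Hypotheses on the asymmetric class of double-well drifts `f`, with stable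
equilibrium branches `xm < xp`, unstable branch `x0`, avoided saddle-node
bifurcation near `(xc, 0)`, and comparison constants `cm ≤ cp`. -/
structure AsymClass (d T a₁ cm cp ε a₀ xc : ℝ) (f : ℝ → ℝ → ℝ)
    (xm x0 xp : ℝ → ℝ) : Prop where
  hd : 0 < d
  hT : 0 < T
  hT' : T < 1 / 2
  hε : 0 < ε
  ha₀ : 0 ≤ a₀
  ha₁ : 0 < a₁
  hcm : 0 < cm
  hcmcp : cm ≤ cp
  smooth : ContDiffOn ℝ 3 (fun p : ℝ × ℝ => f p.1 p.2) (Icc (-d) d ×ˢ univ)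
  periodic : ∀ x t, f x (t + 1) = f x t
  xm_cont : Continuous xm
  x0_cont : Continuous x0
  xp_cont : Continuous xp
  order : ∀ t, xm t < x0 t ∧ x0 t < xp t
  range : ∀ t, xm t ∈ Icc (-d) d ∧ x0 t ∈ Icc (-d) d ∧ xp t ∈ Icc (-d) d
  zeros : ∀ x t, |x| ≤ d → (f x t = 0 ↔ x = xm t ∨ x = x0 t ∨ x = xp t)
  isolated : ∀ δ > (0:ℝ), ∃ ρ > (0:ℝ), ∀ x t, |x| ≤ d →
    δ ≤ |x - xm t| → δ ≤ |x - x0 t| → δ ≤ |x - xp t| → ρ ≤ |f x t|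
  stab_p : ∀ t, dxf f (xp t) t < 0
  stab_m : ∀ t, dxf f (xm t) t < 0
  stab_0 : ∀ t, 0 < dxf f (x0 t) t
  hxc : |xc| < d
  fold : dxxf f xc 0 < 0
  dxf_small : ∀ t, |t| ≤ T → |dxf f xc t| ≤ cp * t ^ 2
  f_taylor : ∀ t, |t| ≤ T → |f xc t - (a₀ + a₁ * t ^ 2)| ≤ cp * |t| ^ 3
  xp_asymp : ∀ t, |t| ≤ T → cm * max (Real.sqrt a₀) |t| ≤ xp t - xc ∧
    xp t - xc ≤ cp * max (Real.sqrt a₀) |t|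
  x0_asymp : ∀ t, |t| ≤ T → cm * max (Real.sqrt a₀) |t| ≤ xc - x0 t ∧
    xc - x0 t ≤ cp * max (Real.sqrt a₀) |t|
  ap_asymp : ∀ t, |t| ≤ T → cm * max (Real.sqrt a₀) |t| ≤ -dxf f (xp t) t ∧
    -dxf f (xp t) t ≤ cp * max (Real.sqrt a₀) |t|
  a0_asymp : ∀ t, |t| ≤ T → cm * max (Real.sqrt a₀) |t| ≤ dxf f (x0 t) t ∧
    dxf f (x0 t) t ≤ cp * max (Real.sqrt a₀) |t|
  xm_asymp : ∀ t, |t| ≤ T → cm ≤ xc - xm t ∧ xc - xm t ≤ cp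
  am_asymp : ∀ t, |t| ≤ T → cm ≤ -dxf f (xm t) t ∧ -dxf f (xm t) t ≤ cp
  /-- an analogous avoided saddle-node bifurcation, with opposite signs, occurs at
  some `(xc', tc)` with `tc ∈ (T, 1-T)`, and branches and linearizations stay
  bounded away from zero between the two close encounters. -/
  second_bif : ∃ xc' tc a₁' : ℝ, T < tc ∧ tc < 1 - T ∧ |xc'| ≤ d ∧
    cm ≤ a₁' ∧ a₁' ≤ cp ∧ 0 < dxxf f xc' tc ∧
    (∀ t, |t| ≤ T → |dxf f xc' (tc + t)| ≤ cp * t ^ 2 ∧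
      |f xc' (tc + t) + (a₀ + a₁' * t ^ 2)| ≤ cp * |t| ^ 3) ∧
    (∀ t, (T ≤ t ∧ t ≤ tc - T) ∨ (tc + T ≤ t ∧ t ≤ 1 - T) →
      cm ≤ xp t - x0 t ∧ cm ≤ x0 t - xm t ∧
      cm ≤ -dxf f (xp t) t ∧ cm ≤ -dxf f (xm t) t ∧ cm ≤ dxf f (x0 t) t)

/-- `xdet` solves the slow ODE `ε ẋ = f(x,t)` on `[-T,T]` and starts at time `-T`
at distance `≍ ε` above the branch `xs`. -/
structure IsDetSol (ε T cm cp : ℝ) (f : ℝ → ℝ → ℝ) (xs xdet : ℝ → ℝ) : Prop where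
  ode : ∀ t ∈ Icc (-T) T, HasDerivAt xdet (f (xdet t) t / ε) t
  init_lo : cm * ε ≤ xdet (-T) - xs (-T)
  init_hi : xdet (-T) - xs (-T) ≤ cp * ε

/-- The linearization of `f` along the deterministic solution. -/
def abar (f : ℝ → ℝ → ℝ) (xdet : ℝ → ℝ) (t : ℝ) : ℝ := dxf f (xdet t) t

/-- `ᾱ(t,s) = ∫_s^t ā(u) du`. -/
def albar (f : ℝ → ℝ → ℝ) (xdet : ℝ → ℝ) (t s : ℝ) : ℝ := ∫ u in s..t, abar f xdet u

/-- The function `ζ(t)` governing the variance of the linearized process. -/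
def zeta (ε T : ℝ) (f : ℝ → ℝ → ℝ) (xdet : ℝ → ℝ) (t : ℝ) : ℝ :=
  Real.exp (2 * albar f xdet t (-T) / ε) / (2 * |abar f xdet (-T)|)
    + ε⁻¹ * ∫ s in (-T)..t, Real.exp (2 * albar f xdet t s / ε)

/-- `α(t,s) = ∫_s^t a(u) du` where `a(u) = ∂ₓf(0,u)`. -/
def alphaInt (f : ℝ → ℝ → ℝ) (t s : ℝ) : ℝ := ∫ u in s..t, dxf f 0 u

/-- `α̂(t,s) = ∫_s^t ∂ₓf(x̂det_u, u) du` along a solution `xhat`. -/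
def alphaHat (f : ℝ → ℝ → ℝ) (xhat : ℝ → ℝ) (t s : ℝ) : ℝ := ∫ u in s..t, dxf f (xhat u) u

/-- `W` is a standard Brownian motion on `(Ω, ℙ)`. -/
structure IsBM {Ω : Type} [MeasurableSpace Ω] (ℙ : Measure Ω) (W : ℝ → Ω → ℝ) : Prop where
  meas : ∀ t, Measurable (W t)
  cont : ∀ᵐ ω ∂ℙ, Continuous fun t => W t ω
  gauss : ∀ s t : ℝ, s ≤ t →
    ℙ.map (fun ω => W t ω - W s ω) = ProbabilityTheory.gaussianReal 0 (Real.toNNReal (t - s))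
  indep : ∀ s t u v : ℝ, s ≤ t → t ≤ u → u ≤ v →
    ProbabilityTheory.IndepFun (fun ω => W t ω - W s ω) (fun ω => W v ω - W u ω) ℙ

/-- `X` is the pathwise solution, driven by `W`, of
`dx = ε⁻¹ f(x,t) dt + σ ε^{-1/2} dW` with `X_{t₀} = x₀`. -/
structure IsSol {Ω : Type} [MeasurableSpace Ω] (ℙ : Measure Ω) (ε σ : ℝ)
    (f : ℝ → ℝ → ℝ) (W : ℝ → Ω → ℝ) (t₀ x₀ : ℝ) (X : ℝ → Ω → ℝ) : Prop where
  meas : ∀ t, Measurable (X t)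
  sol : ∀ᵐ ω ∂ℙ, Continuous (fun t => X t ω) ∧ ∀ t, t₀ ≤ t →
    X t ω = x₀ + ε⁻¹ * (∫ s in t₀..t, f (X s ω) s)
      + σ / Real.sqrt ε * (W t ω - W t₀ ω)

/-- `Y` is the pathwise solution, driven by `W`, of the linear SDE
`dy = ε⁻¹ ã(t) y dt + σ ε^{-1/2} dW` with `Y_{t₀} = y₀`. -/
structure IsLinSol {Ω : Type} [MeasurableSpace Ω] (ℙ : Measure Ω) (ε σ : ℝ)
    (atil : ℝ → ℝ) (W : ℝ → Ω → ℝ) (t₀ y₀ : ℝ) (Y : ℝ → Ω → ℝ) : Prop where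
  meas : ∀ t, Measurable (Y t)
  sol : ∀ᵐ ω ∂ℙ, Continuous (fun t => Y t ω) ∧ ∀ t, t₀ ≤ t →
    Y t ω = y₀ + ε⁻¹ * (∫ s in t₀..t, atil s * Y s ω)
      + σ / Real.sqrt ε * (W t ω - W t₀ ω)

/-- The slow-fast scalar quantity of Lemmas 3.2/4.1:
`F(t) = χ₀ e^{α̃(t,-T)/ε} + ε⁻¹ ∫_{-T}^t e^{α̃(t,s)/ε} ds`. -/
def Ffun (ε T : ℝ) (atil : ℝ → ℝ) (χ₀ t : ℝ) : ℝ :=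
  χ₀ * Real.exp ((∫ u in (-T)..t, atil u) / ε)
    + ε⁻¹ * ∫ s in (-T)..t, Real.exp ((∫ u in s..t, atil u) / ε)

end

/-!
With `m = max (max β √ε) |t|`, the value `F(t)` has size `1 / m`. Going back from time `t`, the
kernel `exp (α̃(t, s) / ε)` stays bounded below as long as `t - s ≤ ε / m`, because there
`β ∨ |u| ≤ 2 m`. Conversely `∫ u in s..t, β ∨ |u|` is at least a quarter of `m (t - s) - ε`, even
when `[s, t]` contains the point `0` where the pinning is weakest, so the kernel decays at rate
`m / ε` up to constants. The integral term of `F(t)` is thus of order `ε⁻¹ · (ε / m) = 1 / m`. The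
initial term is bounded, hence at most of order `1 / m`; it carries the lower bound when `t` is
within `ε / m` of `-T`, where the integral is too short but `m ≥ T / 2`.
-/

theorem integral_abs_id (s t : ℝ) : ∫ u in s..t, |u| = t * |t| / 2 - s * |s| / 2 := by
  refine integral_eq_of_hasDerivAt_off_countable (fun u : ℝ => u * |u| / 2) (fun u => |u|)
    (countable_singleton 0) (by fun_prop) (fun u hu => ?_) (continuous_abs.intervalIntegrable _ _)
  refine (((hasDerivAt_id' u).fun_mul (hasDerivAt_abs hu.2)).div_const 2).congr_deriv ?_
  rw [self_mul_sign]
  ring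

theorem sq_sub_div_four_le_integral_abs {s t : ℝ} (hst : s ≤ t) :
    (t - s) ^ 2 / 4 ≤ ∫ u in s..t, |u| := by
  rw [integral_abs_id]
  rcases abs_cases t with ⟨ht, _⟩ | ⟨ht, _⟩ <;> rcases abs_cases s with ⟨hs, _⟩ | ⟨hs, _⟩ <;>
    rw [ht, hs] <;> nlinarith [sq_nonneg (s + t)]

theorem abs_mul_sub_div_four_le_integral_abs {s t : ℝ} (hst : s ≤ t) :
    |t| * (t - s) / 4 ≤ ∫ u in s..t, |u| := by
  rw [integral_abs_id]
  rcases abs_cases t with ⟨ht, _⟩ | ⟨ht, _⟩ <;> rcases abs_cases s with ⟨hs, _⟩ | ⟨hs, _⟩ <;>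
    rw [ht, hs] <;> nlinarith [sq_nonneg (s + t), sq_nonneg (t - s)]

theorem integral_exp_neg_mul_sub_le {k : ℝ} (hk : 0 < k) (s t : ℝ) :
    ∫ r in s..t, exp (-(k * (t - r))) ≤ k⁻¹ := by
  have heq : ∫ r in s..t, exp (-(k * (t - r))) = k⁻¹ * (1 - exp (k * s - k * t)) := by
    have hexp (r : ℝ) : -(k * (t - r)) = k * r - k * t := by ring
    simp only [hexp]
    rw [intervalIntegral.integral_comp_mul_sub (fun x => exp x) hk.ne']
    simp
  rw [heq]
  exact mul_le_of_le_one_right (inv_nonneg.2 hk.le) (by linarith [exp_pos (k * s - k * t)])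

/-- The scale `β ∨ √ε ∨ |t|`, whose inverse is the order of magnitude of `Ffun` at time `t`.
It merges the two regimes `|t| ≤ β ∨ √ε` and `β ∨ √ε ≤ |t|`. -/
noncomputable def crossoverScale (ε β t : ℝ) : ℝ := max (max β √ε) |t|

section CrossoverScale

variable {ε β s t u : ℝ}

theorem le_crossoverScale : β ≤ crossoverScale ε β t :=
  (le_max_left _ _).trans (le_max_left _ _)

theorem sqrt_le_crossoverScale : √ε ≤ crossoverScale ε β t :=
  (le_max_right _ _).trans (le_max_left _ _)

theorem abs_le_crossoverScale : |t| ≤ crossoverScale ε β t :=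
  le_max_right _ _

theorem crossoverScale_pos (hε : 0 < ε) : 0 < crossoverScale ε β t :=
  (Real.sqrt_pos.2 hε).trans_le sqrt_le_crossoverScale

theorem div_crossoverScale_le (hε : 0 < ε) :
    ε / crossoverScale ε β t ≤ crossoverScale ε β t := by
  rw [div_le_iff₀ (crossoverScale_pos hε), ← sq]
  exact (Real.sqrt_le_left (crossoverScale_pos hε).le).1 sqrt_le_crossoverScale

theorem max_abs_le_two_mul_crossoverScale (hε : 0 < ε)
    (hu : t - ε / crossoverScale ε β t ≤ u) (hut : u ≤ t) :
    max β |u| ≤ 2 * crossoverScale ε β t := by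
  have hpos : 0 < crossoverScale ε β t := crossoverScale_pos hε
  have hdiv : ε / crossoverScale ε β t ≤ crossoverScale ε β t := div_crossoverScale_le hε
  obtain ⟨hlower, hupper⟩ := abs_le.1 (abs_le_crossoverScale (ε := ε) (β := β) (t := t))
  refine max_le (le_crossoverScale.trans (by linarith)) (abs_le.2 ⟨?_, ?_⟩) <;> linarith

theorem crossoverScale_mul_sub_le (hε : 0 ≤ ε) (hst : s ≤ t) :
    crossoverScale ε β t * (t - s) ≤ 4 * (∫ u in s..t, max β |u|) + ε := by
  have hsub : 0 ≤ t - s := sub_nonneg.2 hst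
  have hint : IntervalIntegrable (fun u : ℝ => max β |u|) volume s t :=
    Continuous.intervalIntegrable (by fun_prop) _ _
  have habs : ∫ u in s..t, |u| ≤ ∫ u in s..t, max β |u| :=
    intervalIntegral.integral_mono_on hst (continuous_abs.intervalIntegrable _ _) hint
      fun u _ => le_max_right β |u|
  have hconst : β * (t - s) ≤ ∫ u in s..t, max β |u| := by
    simpa [mul_comm] using intervalIntegral.integral_mono_on hst
      intervalIntegrable_const hint fun u _ => le_max_left β |u|
  have hsq := sq_sub_div_four_le_integral_abs hst
  have hlin := abs_mul_sub_div_four_le_integral_abs hst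
  have hsqrt : √ε * (t - s) ≤ (t - s) ^ 2 + ε := by
    nlinarith [Real.sq_sqrt hε, sq_nonneg (t - s - √ε)]
  have hnonneg : 0 ≤ (t - s) ^ 2 := sq_nonneg _
  rw [crossoverScale, max_mul_of_nonneg _ _ hsub, max_mul_of_nonneg _ _ hsub]
  exact max_le (max_le (by linarith) (by linarith)) (by linarith)

end CrossoverScale

section Exponent

variable {ε β c s t : ℝ} {a : ℝ → ℝ}

theorem integral_div_le_of_le_neg_mul_max (hε : 0 < ε) (hc : 0 ≤ c) (hst : s ≤ t)
    (ha : IntervalIntegrable a volume s t) (hle : ∀ u ∈ Icc s t, a u ≤ -(c * max β |u|)) :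
    (∫ u in s..t, a u) / ε ≤ c / 4 - c / 4 * crossoverScale ε β t / ε * (t - s) := by
  have hmono : ∫ u in s..t, a u ≤ ∫ u in s..t, -(c * max β |u|) :=
    intervalIntegral.integral_mono_on hst ha
      (Continuous.intervalIntegrable (by fun_prop) _ _) hle
  rw [intervalIntegral.integral_neg, intervalIntegral.integral_const_mul] at hmono
  rw [div_le_iff₀ hε]
  calc ∫ u in s..t, a u
      ≤ -(c * ∫ u in s..t, max β |u|) := hmono
    _ ≤ c / 4 * (ε - crossoverScale ε β t * (t - s)) := by
        linarith [mul_le_mul_of_nonneg_left (crossoverScale_mul_sub_le (β := β) hε.le hst) hc]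
    _ = (c / 4 - c / 4 * crossoverScale ε β t / ε * (t - s)) * ε := by field_simp

theorem neg_two_mul_le_integral_div_of_neg_mul_max_le (hε : 0 < ε) (hc : 0 ≤ c) (hst : s ≤ t)
    (hs : t - ε / crossoverScale ε β t ≤ s) (ha : IntervalIntegrable a volume s t)
    (hle : ∀ u ∈ Icc s t, -(c * max β |u|) ≤ a u) :
    -(2 * c) ≤ (∫ u in s..t, a u) / ε := by
  have hmono : ∫ _ in s..t, -(c * (2 * crossoverScale ε β t)) ≤ ∫ u in s..t, a u := by
    refine intervalIntegral.integral_mono_on hst intervalIntegrable_const ha fun u hu => ?_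
    refine le_trans (neg_le_neg ?_) (hle u hu)
    gcongr
    exact max_abs_le_two_mul_crossoverScale hε (hs.trans hu.1) hu.2
  rw [intervalIntegral.integral_const, smul_eq_mul] at hmono
  have hlength : (t - s) * crossoverScale ε β t ≤ ε :=
    (le_div_iff₀ (crossoverScale_pos hε)).1 (by linarith)
  rw [le_div_iff₀ hε]
  linarith [mul_le_mul_of_nonneg_left hlength hc]

theorem intervalIntegrable_exp_integral_div (ha : IntervalIntegrable a volume s t) :
    IntervalIntegrable (fun r => exp ((∫ u in r..t, a u) / ε)) volume s t := by
  have hprimitive : ContinuousOn (fun r => ∫ u in r..t, a u) (uIcc s t) :=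
    intervalIntegral.continuousOn_primitive_interval_left ((intervalIntegrable_iff').1 ha)
  exact (continuous_exp.comp_continuousOn (hprimitive.div_const ε)).intervalIntegrable

end Exponent

section Ffun

variable {ε β T χ₀ c t : ℝ} {a : ℝ → ℝ}

theorem mul_exp_le_Ffun (hε : 0 ≤ ε) (ht : -T ≤ t) :
    χ₀ * exp ((∫ u in (-T)..t, a u) / ε) ≤ Ffun ε T a χ₀ t :=
  le_add_of_nonneg_right <| mul_nonneg (inv_nonneg.2 hε) <|
    intervalIntegral.integral_nonneg ht fun _ _ => (exp_pos _).le

theorem inv_mul_mul_exp_neg_le_Ffun {K δ : ℝ} (hε : 0 ≤ ε) (hχ₀ : 0 ≤ χ₀) (hδ : 0 ≤ δ)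
    (hδt : -T ≤ t - δ) (ha : IntervalIntegrable a volume (-T) t)
    (hK : ∀ s ∈ Icc (t - δ) t, -K ≤ (∫ u in s..t, a u) / ε) :
    ε⁻¹ * (δ * exp (-K)) ≤ Ffun ε T a χ₀ t := by
  have hint : IntervalIntegrable (fun s => exp ((∫ u in s..t, a u) / ε)) volume (-T) t :=
    intervalIntegrable_exp_integral_div ha
  have hwindow : t - δ ≤ t := sub_le_self t hδ
  have hbound : δ * exp (-K) ≤ ∫ s in (-T)..t, exp ((∫ u in s..t, a u) / ε) := by
    calc δ * exp (-K)
        = ∫ _ in (t - δ)..t, exp (-K) := by simp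
      _ ≤ ∫ s in (t - δ)..t, exp ((∫ u in s..t, a u) / ε) := by
          refine intervalIntegral.integral_mono_on hwindow intervalIntegrable_const
            (hint.mono_set ?_) fun s hs => exp_le_exp.2 (hK s hs)
          exact uIcc_subset_uIcc_right (mem_uIcc_of_le hδt hwindow)
      _ ≤ ∫ s in (-T)..t, exp ((∫ u in s..t, a u) / ε) :=
          intervalIntegral.integral_mono_interval hδt hwindow le_rfl
            (ae_of_all _ fun s => (exp_pos _).le) hint
  calc ε⁻¹ * (δ * exp (-K))
      ≤ ε⁻¹ * ∫ s in (-T)..t, exp ((∫ u in s..t, a u) / ε) := by gcongr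
    _ ≤ Ffun ε T a χ₀ t := le_add_of_nonneg_left (by positivity)

theorem Ffun_le_of_integral_div_le {K k : ℝ} (hε : 0 ≤ ε) (hχ₀ : 0 ≤ χ₀) (hk : 0 < k)
    (ht : -T ≤ t) (ha : IntervalIntegrable a volume (-T) t)
    (hK : ∀ s ∈ Icc (-T) t, (∫ u in s..t, a u) / ε ≤ K - k * (t - s)) :
    Ffun ε T a χ₀ t ≤ exp K * (χ₀ + (ε * k)⁻¹) := by
  have hinitial : exp ((∫ u in (-T)..t, a u) / ε) ≤ exp K := by
    refine exp_le_exp.2 ((hK (-T) ⟨le_rfl, ht⟩).trans (sub_le_self _ ?_))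
    exact mul_nonneg hk.le (sub_nonneg.2 ht)
  have hintegral : ∫ s in (-T)..t, exp ((∫ u in s..t, a u) / ε) ≤ exp K * k⁻¹ := by
    calc ∫ s in (-T)..t, exp ((∫ u in s..t, a u) / ε)
        ≤ ∫ s in (-T)..t, exp K * exp (-(k * (t - s))) := by
          refine intervalIntegral.integral_mono_on ht (intervalIntegrable_exp_integral_div ha)
            (Continuous.intervalIntegrable (by fun_prop) _ _) fun s hs => ?_
          rw [← exp_add, ← sub_eq_add_neg]
          exact exp_le_exp.2 (hK s hs)
      _ = exp K * ∫ s in (-T)..t, exp (-(k * (t - s))) :=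
          intervalIntegral.integral_const_mul _ _
      _ ≤ exp K * k⁻¹ := by
          gcongr
          exact integral_exp_neg_mul_sub_le hk _ _
  calc Ffun ε T a χ₀ t
      ≤ χ₀ * exp K + ε⁻¹ * (exp K * k⁻¹) := by
        unfold Ffun
        gcongr
    _ = exp K * (χ₀ + (ε * k)⁻¹) := by
        rw [mul_inv]
        ring

theorem Ffun_le_exp_mul_add_div_crossoverScale (hε : 0 < ε) (hc : 0 < c) (hχ₀ : 0 ≤ χ₀)
    (ht : -T ≤ t) (ha : IntervalIntegrable a volume (-T) t)
    (hle : ∀ u ∈ Icc (-T) t, a u ≤ -(c * max β |u|)) :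
    Ffun ε T a χ₀ t ≤ exp (c / 4) * (χ₀ + 4 / c / crossoverScale ε β t) := by
  have hm : 0 < crossoverScale ε β t := crossoverScale_pos hε
  have hrate : 4 / c / crossoverScale ε β t = (ε * (c / 4 * crossoverScale ε β t / ε))⁻¹ := by
    field_simp
  rw [hrate]
  refine Ffun_le_of_integral_div_le hε.le hχ₀ (by positivity) ht ha fun s hs => ?_
  refine integral_div_le_of_le_neg_mul_max hε hc.le hs.2 (ha.mono_set ?_)
    fun u hu => hle u ⟨hs.1.trans hu.1, hu.2⟩
  exact uIcc_subset_uIcc_right (mem_uIcc_of_le hs.1 hs.2)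

theorem Ffun_le_div_crossoverScale {M : ℝ} (hε : 0 < ε) (hc : 0 < c) (hχ₀ : 0 ≤ χ₀)
    (hM : crossoverScale ε β t ≤ M) (ht : -T ≤ t) (ha : IntervalIntegrable a volume (-T) t)
    (hle : ∀ u ∈ Icc (-T) t, a u ≤ -(c * max β |u|)) :
    Ffun ε T a χ₀ t ≤ exp (c / 4) * (χ₀ * M + 4 / c) / crossoverScale ε β t := by
  have hratio : 1 ≤ M / crossoverScale ε β t := (one_le_div (crossoverScale_pos hε)).2 hM
  calc Ffun ε T a χ₀ t
      ≤ exp (c / 4) * (χ₀ + 4 / c / crossoverScale ε β t) :=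
        Ffun_le_exp_mul_add_div_crossoverScale hε hc hχ₀ ht ha hle
    _ ≤ exp (c / 4) * (χ₀ * (M / crossoverScale ε β t) + 4 / c / crossoverScale ε β t) := by
        gcongr
        exact le_mul_of_one_le_right hχ₀ hratio
    _ = exp (c / 4) * (χ₀ * M + 4 / c) / crossoverScale ε β t := by ring

theorem div_crossoverScale_le_Ffun (hε : 0 < ε) (hc : 0 ≤ c) (hχ₀ : 0 ≤ χ₀) (ht : -T ≤ t)
    (ha : IntervalIntegrable a volume (-T) t)
    (hle : ∀ u ∈ Icc (-T) t, -(c * max β |u|) ≤ a u) :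
    min 1 (χ₀ * T / 2) * exp (-(2 * c)) / crossoverScale ε β t ≤ Ffun ε T a χ₀ t := by
  have hm : 0 < crossoverScale ε β t := crossoverScale_pos hε
  set m := crossoverScale ε β t
  have hkernel : ∀ s ∈ Icc (-T) t, t - ε / m ≤ s → -(2 * c) ≤ (∫ u in s..t, a u) / ε := by
    intro s hs hsm
    refine neg_two_mul_le_integral_div_of_neg_mul_max_le hε hc hs.2 hsm (ha.mono_set ?_)
      fun u hu => hle u ⟨hs.1.trans hu.1, hu.2⟩
    exact uIcc_subset_uIcc_right (mem_uIcc_of_le hs.1 hs.2)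
  rcases le_total (-T) (t - ε / m) with hlate | hearly
  · calc min 1 (χ₀ * T / 2) * exp (-(2 * c)) / m
        ≤ 1 * exp (-(2 * c)) / m := by
          gcongr
          exact min_le_left _ _
      _ = ε⁻¹ * (ε / m * exp (-(2 * c))) := by field_simp
      _ ≤ Ffun ε T a χ₀ t :=
          inv_mul_mul_exp_neg_le_Ffun hε.le hχ₀ (div_pos hε hm).le hlate ha
            fun s hs => hkernel s ⟨hlate.trans hs.1, hs.2⟩ hs.1
  · have hTm : T / 2 ≤ m := by
      have hdiv : ε / m ≤ m := div_crossoverScale_le hε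
      linarith [neg_le_of_abs_le (abs_le_crossoverScale (ε := ε) (β := β) (t := t))]
    calc min 1 (χ₀ * T / 2) * exp (-(2 * c)) / m
        ≤ χ₀ * T / 2 * exp (-(2 * c)) / m := by
          gcongr
          exact min_le_right _ _
      _ = χ₀ * exp (-(2 * c)) * (T / 2 / m) := by ring
      _ ≤ χ₀ * exp (-(2 * c)) := mul_le_of_le_one_right (by positivity) ((div_le_one hm).2 hTm)
      _ ≤ χ₀ * exp ((∫ u in (-T)..t, a u) / ε) := by
          gcongr
          exact hkernel (-T) ⟨le_rfl, ht⟩ hearly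
      _ ≤ Ffun ε T a χ₀ t := mul_exp_le_Ffun hε.le ht

end Ffun

theorem lemma_slow_fast_linear_general (T cl cu xl xu ε₀ : ℝ)
    (hT : 0 < T) (hc : 0 < cl) (hcc : cl ≤ cu) (hχ : 0 < xl) (hχχ : xl ≤ xu) :
    ∃ Cl Cu : ℝ, 0 < Cl ∧ 0 < Cu ∧
      ∀ (ε β χ₀ : ℝ) (atil : ℝ → ℝ),
        0 < ε → ε ≤ ε₀ → β ≤ ε₀ →
        IntervalIntegrable atil volume (-T) T →
        (∀ t, |t| ≤ T → -(cu * max β |t|) ≤ atil t ∧ atil t ≤ -(cl * max β |t|)) →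
        xl ≤ χ₀ → χ₀ ≤ xu →
        ∀ t, |t| ≤ T →
          (|t| ≤ max β √ε →
            Cl / max β √ε ≤ Ffun ε T atil χ₀ t ∧ Ffun ε T atil χ₀ t ≤ Cu / max β √ε) ∧
          (max β √ε ≤ |t| →
            Cl / |t| ≤ Ffun ε T atil χ₀ t ∧ Ffun ε T atil χ₀ t ≤ Cu / |t|) := by
  have hxu : 0 < xu := hχ.trans_le hχχ
  refine ⟨min 1 (xl * T / 2) * exp (-(2 * cu)),
    exp (cl / 4) * (xu * max (max ε₀ √ε₀) T + 4 / cl), by positivity, by positivity,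
    fun ε β χ₀ a hε hεε₀ hβ ha hpin hl hu t ht => ?_⟩
  obtain ⟨hTt, htT⟩ := abs_le.1 ht
  have hχ₀ : 0 ≤ χ₀ := hχ.le.trans hl
  have hm : 0 < crossoverScale ε β t := crossoverScale_pos hε
  have hmM : crossoverScale ε β t ≤ max (max ε₀ √ε₀) T :=
    max_le_max (max_le_max hβ (Real.sqrt_le_sqrt hεε₀)) ht
  have hpast : ∀ u ∈ Icc (-T) t, |u| ≤ T := fun u hu => abs_le.2 ⟨hu.1, hu.2.trans htT⟩
  have hint : IntervalIntegrable a volume (-T) t :=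
    ha.mono_set (uIcc_subset_uIcc_left (mem_uIcc_of_le hTt htT))
  have hlower := div_crossoverScale_le_Ffun hε (hc.le.trans hcc) hχ₀ hTt hint
    fun u hu => (hpin u (hpast u hu)).1
  have hupper := Ffun_le_div_crossoverScale hε hc hχ₀ hmM hTt hint
    fun u hu => (hpin u (hpast u hu)).2
  have hbounds : min 1 (xl * T / 2) * exp (-(2 * cu)) / crossoverScale ε β t
        ≤ Ffun ε T a χ₀ t ∧
      Ffun ε T a χ₀ t
        ≤ exp (cl / 4) * (xu * max (max ε₀ √ε₀) T + 4 / cl) / crossoverScale ε β t :=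
    ⟨hlower.trans' (by gcongr), hupper.trans (by gcongr)⟩
  rw [crossoverScale] at hbounds
  exact ⟨fun hinner => by rwa [max_eq_left hinner] at hbounds,
    fun houter => by rwa [max_eq_right houter] at hbounds⟩

/-- Lemma 4.1: two-sided bounds for
`F(t) = χ₀ e^{α̃(t,-T)/ε} + ε⁻¹ ∫_{-T}^t e^{α̃(t,s)/ε} ds` when the drift
coefficient `ã` is linearly pinned, `-cu(β ∨ |t|) ≤ ã(t) ≤ -cl(β ∨ |t|)`. -/
theorem lemma_slow_fast_linear (T cl cu xl xu : ℝ)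
    (hT : 0 < T) (hc : 0 < cl) (hcc : cl ≤ cu) (hχ : 0 < xl) (hχχ : xl ≤ xu) :
    ∃ Cl Cu ε₀ : ℝ, 0 < Cl ∧ 0 < Cu ∧ 0 < ε₀ ∧
      ∀ (ε β χ₀ : ℝ) (atil : ℝ → ℝ),
        0 < ε → ε ≤ ε₀ → 0 ≤ β → β ≤ ε₀ →
        ContinuousOn atil (Icc (-T) T) →
        (∀ t, |t| ≤ T → -(cu * max β |t|) ≤ atil t ∧ atil t ≤ -(cl * max β |t|)) →
        xl ≤ χ₀ → χ₀ ≤ xu →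
        ∀ t, |t| ≤ T →
          (|t| ≤ max β (Real.sqrt ε) →
            Cl / max β (Real.sqrt ε) ≤ Ffun ε T atil χ₀ t ∧
            Ffun ε T atil χ₀ t ≤ Cu / max β (Real.sqrt ε)) ∧
          (max β (Real.sqrt ε) ≤ |t| →
            Cl / |t| ≤ Ffun ε T atil χ₀ t ∧ Ffun ε T atil χ₀ t ≤ Cu / |t|) := by
  obtain ⟨Cl, Cu, hCl, hCu, hbounds⟩ :=
    lemma_slow_fast_linear_general T cl cu xl xu 1 hT hc hcc hχ hχχ
  exact ⟨Cl, Cu, 1, hCl, hCu, one_pos, fun ε β χ₀ a hε hε₁ _ hβ₁ ha =>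
    hbounds ε β χ₀ a hε hε₁ hβ₁ (ha.intervalIntegrable_of_Icc (by linarith))⟩

end BerglundGentz
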